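/- arXiv:2312.15381 — 6 statements merged into one kernel-verified Lean document; each statement's English description precedes it below -/
import Mathlib

section
/- With parthood defined by P x y ↔ ∃ zz, F zz y ∧ x ∈ zz, one has for all individuals x, y: P x y if and only if F ({x} ∪ {y}) y. -/
/-- Components of `zz`: all objects that are one of some plurality fusing to a member of `zz`. -/
def Ucomp {α : Type*} (F : Set α → α → Prop) (zz : Set α) : Set α :=
  {u | ∃ z ∈ zz, ∃ yy, F yy z ∧ u ∈ yy}

/-- Parthood defined from fusion: `x` is part of `y` iff `y` fuses some plurality containing `x`. -/
def PartF {α : Type*} (F : Set α → α → Prop) (x y : α) : Prop :=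
  ∃ zz, F zz y ∧ x ∈ zz

/-- Overlap defined from the fusion-induced parthood. -/
def OvF {α : Type*} (F : Set α → α → Prop) (x y : α) : Prop :=
  ∃ z, PartF F z x ∧ PartF F z y

section Fusion

variable {α : Type*} {F : Set α → α → Prop}

theorem fusion_singleton_self {x : α} (exists_fusion : ∃ z, F {x} z)
    (eq_of_fusion : ∀ z, F {x} z → z = x) : F {x} x := by
  obtain ⟨z, hz⟩ := exists_fusion
  rwa [eq_of_fusion z hz] at hz

theorem fusion_union_of_subset
    (extF : ∀ (zz yy uu : Set α) (x v : α),
      F zz x → F yy x → F (uu ∪ zz) v → F (uu ∪ yy) v)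
    {uu zz yy : Set α} {x : α} (hzz : F zz x) (hyy : F yy x) (huu : uu ⊆ zz) :
    F (uu ∪ yy) x := by
  have absorb : F (uu ∪ zz) x := by rwa [Set.union_eq_self_of_subset_left huu]
  exact extF zz yy uu x x hzz hyy absorb

theorem part_iff_fusion_pair_general
    (extF : ∀ (zz yy uu : Set α) (x v : α),
      F zz x → F yy x → F (uu ∪ zz) v → F (uu ∪ yy) v)
    (singleton_self : ∀ x, F {x} x) (x y : α) :
    PartF F x y ↔ F ({x} ∪ {y}) y := by
  constructor
  · rintro ⟨zz, hzz, hx⟩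
    exact fusion_union_of_subset extF hzz (singleton_self y) (Set.singleton_subset_iff.mpr hx)
  · exact fun hpair ↦ ⟨{x} ∪ {y}, hpair, Set.mem_union_left {y} (Set.mem_singleton x)⟩

end Fusion

theorem part_iff_fusion_pair {α : Type*} (F : Set α → α → Prop)
    (exF : ∀ zz : Set α, zz.Nonempty → ∃ y, F zz y)
    (extF : ∀ (zz yy uu : Set α) (x v : α),
      F zz x → F yy x → F (uu ∪ zz) v → F (uu ∪ yy) v)
    (idF : ∀ x y : α, F {y} x → x = y)
    (compF : ∀ (zz : Set α) (x y : α), F (zz ∪ {x}) y → F zz y →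
      ∃ vv, vv ⊆ Ucomp F zz ∧ F vv x ∧ vv.Nonempty)
    (wspF : ∀ x y : α, F ({x} ∪ {y}) y → x ≠ y →
      ∃ z ∈ Ucomp F {y}, ¬ ∃ u, F (Ucomp F {x} ∩ Ucomp F {z}) u) :
    ∀ x y : α, PartF F x y ↔ F ({x} ∪ {y}) y :=
  part_iff_fusion_pair_general extF fun x ↦
    fusion_singleton_self (exF {x} (Set.singleton_nonempty x)) (idF · x)
end

section
/- The defined parthood relation P is antisymmetric: for all individuals x, y, if P x y and P y x then x = y. -/
/-!
Extensionality allows a plurality to be replaced, inside any larger plurality, by another one with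
the same fusion, in particular by the singleton of that fusion. Replacing the whole plurality shows
that fusions are unique. Replacing `zz` by its fusion `y` in `{x} ∪ zz = zz` shows that every part
`x` of `y` satisfies `F {x, y} y`. If `y` is also part of `x`, the pair `{x, y}` fuses to both.
-/

theorem fusion_singleton_self_s3 {α : Type*} {F : Set α → α → Prop}
    (exF : ∀ y, ∃ x, F {y} x) (idF : ∀ x y, F {y} x → x = y) (y : α) : F {y} y := by
  obtain ⟨x, hx⟩ := exF y
  exact idF x y hx ▸ hx

section Extensional

variable {α : Type*} {F : Set α → α → Prop} {x y : α}
  (singletonF : ∀ y : α, F {y} y)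
  (extF : ∀ (zz yy uu : Set α) (x v : α),
    F zz x → F yy x → F (uu ∪ zz) v → F (uu ∪ yy) v)

include singletonF extF

theorem fusion_unique (idF : ∀ x y : α, F {y} x → x = y) {zz : Set α}
    (hx : F zz x) (hy : F zz y) : x = y := by
  have hxy : F (∅ ∪ {y}) x := extF zz {y} ∅ y x hy (singletonF y) (by rwa [Set.empty_union])
  rw [Set.empty_union] at hxy
  exact idF x y hxy

theorem partF_iff_fusion_pair : PartF F x y ↔ F {x, y} y := by
  refine ⟨?_, fun h => ⟨{x, y}, h, Set.mem_insert x {y}⟩⟩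
  rintro ⟨zz, hzz, hx⟩
  have absorb : {x} ∪ zz = zz := Set.union_eq_right.2 (Set.singleton_subset_iff.2 hx)
  exact extF zz {y} {x} y y hzz (singletonF y) (absorb.symm ▸ hzz)

theorem part_antisymm_general (idF : ∀ x y : α, F {y} x → x = y)
    (hxy : PartF F x y) (hyx : PartF F y x) : x = y := by
  have pair_y : F {x, y} y := (partF_iff_fusion_pair singletonF extF).1 hxy
  have pair_x : F {y, x} x := (partF_iff_fusion_pair singletonF extF).1 hyx
  rw [Set.pair_comm] at pair_x
  exact fusion_unique singletonF extF idF pair_x pair_y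

end Extensional

theorem part_antisymm {α : Type*} (F : Set α → α → Prop)
    (exF : ∀ zz : Set α, zz.Nonempty → ∃ y, F zz y)
    (extF : ∀ (zz yy uu : Set α) (x v : α),
      F zz x → F yy x → F (uu ∪ zz) v → F (uu ∪ yy) v)
    (idF : ∀ x y : α, F {y} x → x = y)
    (compF : ∀ (zz : Set α) (x y : α), F (zz ∪ {x}) y → F zz y →
      ∃ vv, vv ⊆ Ucomp F zz ∧ F vv x ∧ vv.Nonempty)
    (wspF : ∀ x y : α, F ({x} ∪ {y}) y → x ≠ y →
      ∃ z ∈ Ucomp F {y}, ¬ ∃ u, F (Ucomp F {x} ∩ Ucomp F {z}) u) :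
    ∀ x y : α, PartF F x y → PartF F y x → x = y := fun _ _ =>
  part_antisymm_general
    (fusion_singleton_self_s3 (fun y => exF {y} (Set.singleton_nonempty y)) idF) extF idF
end

section
/- Every primitive fusion is a fusion in Leśniewski's sense: if F zz x, then every y in zz satisfies P y x, and for every y with P y x there exists v in zz that overlaps y (O v y). -/
/-!
By extensionality a fusion absorbs its own parts: if `x` fuses `zz` and `y` is part of `x`, then
`x` also fuses `zz ∪ {y}`. Compositionality then makes `y` a fusion of components of `zz`, and any
one of these components is a common part of `y` and a member of `zz`.
-/

section

variable {α : Type*} {F : Set α → α → Prop} {zz : Set α} {x y : α}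

theorem mem_Ucomp_iff_exists_partF : x ∈ Ucomp F zz ↔ ∃ z ∈ zz, PartF F x z :=
  Iff.rfl

theorem exists_mem_ovF_iff_exists_mem_Ucomp_partF :
    (∃ v ∈ zz, OvF F v y) ↔ ∃ w ∈ Ucomp F zz, PartF F w y := by
  constructor
  · rintro ⟨v, hv, w, hwv, hwy⟩
    exact ⟨w, mem_Ucomp_iff_exists_partF.mpr ⟨v, hv, hwv⟩, hwy⟩
  · rintro ⟨w, hw, hwy⟩
    obtain ⟨v, hv, hwv⟩ := mem_Ucomp_iff_exists_partF.mp hw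
    exact ⟨v, hv, w, hwv, hwy⟩

theorem fusion_union_singleton_of_partF
    (extF : ∀ (zz yy uu : Set α) (x v : α),
      F zz x → F yy x → F (uu ∪ zz) v → F (uu ∪ yy) v)
    (hzz : F zz x) (hy : PartF F y x) : F (zz ∪ {y}) x := by
  obtain ⟨yy, hyy, hmem⟩ := hy
  have absorbed : F ({y} ∪ yy) x := by
    rwa [Set.singleton_union, Set.insert_eq_of_mem hmem]
  rw [Set.union_comm]
  exact extF yy zz {y} x x hyy hzz absorbed

theorem exists_mem_Ucomp_partF
    (compF : ∀ (zz : Set α) (x y : α), F (zz ∪ {x}) y → F zz y →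
      ∃ vv, vv ⊆ Ucomp F zz ∧ F vv x ∧ vv.Nonempty)
    (hzz : F zz x) (hzzy : F (zz ∪ {y}) x) : ∃ w ∈ Ucomp F zz, PartF F w y := by
  obtain ⟨vv, hsub, hvv, w, hw⟩ := compF zz y x hzzy hzz
  exact ⟨w, hsub hw, vv, hvv, hw⟩

theorem fusion_to_lesniewski_general
    (extF : ∀ (zz yy uu : Set α) (x v : α),
      F zz x → F yy x → F (uu ∪ zz) v → F (uu ∪ yy) v)
    (compF : ∀ (zz : Set α) (x y : α), F (zz ∪ {x}) y → F zz y →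
      ∃ vv, vv ⊆ Ucomp F zz ∧ F vv x ∧ vv.Nonempty)
    (hzz : F zz x) :
    (∀ y ∈ zz, PartF F y x) ∧ ∀ y, PartF F y x → ∃ v ∈ zz, OvF F v y := by
  refine ⟨fun y hy => ⟨zz, hzz, hy⟩, fun y hy => ?_⟩
  rw [exists_mem_ovF_iff_exists_mem_Ucomp_partF]
  exact exists_mem_Ucomp_partF compF hzz (fusion_union_singleton_of_partF extF hzz hy)

end

theorem fusion_to_lesniewski {α : Type*} (F : Set α → α → Prop)
    (exF : ∀ zz : Set α, zz.Nonempty → ∃ y, F zz y)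
    (extF : ∀ (zz yy uu : Set α) (x v : α),
      F zz x → F yy x → F (uu ∪ zz) v → F (uu ∪ yy) v)
    (idF : ∀ x y : α, F {y} x → x = y)
    (compF : ∀ (zz : Set α) (x y : α), F (zz ∪ {x}) y → F zz y →
      ∃ vv, vv ⊆ Ucomp F zz ∧ F vv x ∧ vv.Nonempty)
    (wspF : ∀ x y : α, F ({x} ∪ {y}) y → x ≠ y →
      ∃ z ∈ Ucomp F {y}, ¬ ∃ u, F (Ucomp F {x} ∩ Ucomp F {z}) u) :
    ∀ (zz : Set α) (x : α), F zz x →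
      (∀ y ∈ zz, PartF F y x) ∧ ∀ y, PartF F y x → ∃ v ∈ zz, OvF F v y :=
  fun _ _ hzz => fusion_to_lesniewski_general extF compF hzz
end

section
/- For every individual x and individual y, if F (U {x}) y then x = y; that is, the only fusion of all components of x is x itself. -/
/-!
Since `x` is one of its own components, it is part of any fusion `y` of them. If `x ≠ y`, weak
supplementation provides a part `z` of `y` that does not overlap `x`. But a part of a fusion
overlaps one of the things fused, so `z` overlaps a component of `x`, and hence `x` itself.
-/

section Fusion

variable {α : Type*} {F : Set α → α → Prop} {a b c x y : α} {zz : Set α}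

theorem mem_Ucomp_singleton : a ∈ Ucomp F {x} ↔ PartF F a x := by
  simp [Ucomp, PartF]

theorem fusion_singleton (exF : ∀ zz : Set α, zz.Nonempty → ∃ y, F zz y)
    (idF : ∀ x y : α, F {y} x → x = y) (x : α) : F {x} x := by
  obtain ⟨y, hy⟩ := exF {x} (Set.singleton_nonempty x)
  obtain rfl : y = x := idF y x hy
  exact hy

theorem PartF.refl (hx : F {x} x) : PartF F x x :=
  ⟨{x}, hx, Set.mem_singleton x⟩

theorem OvF.exists_fusion_inter (exF : ∀ zz : Set α, zz.Nonempty → ∃ y, F zz y)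
    (h : OvF F x y) : ∃ u, F (Ucomp F {x} ∩ Ucomp F {y}) u := by
  obtain ⟨w, hwx, hwy⟩ := h
  exact exF _ ⟨w, mem_Ucomp_singleton.2 hwx, mem_Ucomp_singleton.2 hwy⟩

section Extensionality

variable (extF : ∀ (zz yy uu : Set α) (x v : α),
  F zz x → F yy x → F (uu ∪ zz) v → F (uu ∪ yy) v)

include extF

theorem PartF.fusion_insert (ha : PartF F a y) (hzz : F zz y) : F (insert a zz) y := by
  obtain ⟨yy, hyy, hmem⟩ := ha
  have hins : F ({a} ∪ yy) y := by rwa [Set.singleton_union, Set.insert_eq_of_mem hmem]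
  simpa only [Set.singleton_union] using extF yy zz {a} y y hyy hzz hins

theorem PartF.trans (hb : F {b} b) (hab : PartF F a b) (hbc : PartF F b c) : PartF F a c := by
  obtain ⟨zz, hzz, ha⟩ := hab
  obtain ⟨yy, hyy, hmem⟩ := hbc
  have hins : F (yy ∪ {b}) c := by rwa [Set.union_singleton, Set.insert_eq_of_mem hmem]
  exact ⟨yy ∪ zz, extF {b} zz yy b c hb hzz hins, Or.inr ha⟩

theorem OvF.mono_left (ha : F {a} a) (hov : OvF F a b) (hax : PartF F a x) : OvF F x b := by
  obtain ⟨w, hwa, hwb⟩ := hov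
  exact ⟨w, hwa.trans extF ha hax, hwb⟩

theorem PartF.exists_mem_ovF
    (compF : ∀ (zz : Set α) (x y : α), F (zz ∪ {x}) y → F zz y →
      ∃ vv, vv ⊆ Ucomp F zz ∧ F vv x ∧ vv.Nonempty)
    (hb : PartF F b y) (hzz : F zz y) : ∃ a ∈ zz, OvF F a b := by
  have hins : F (zz ∪ {b}) y := by
    rw [Set.union_singleton]
    exact hb.fusion_insert extF hzz
  obtain ⟨vv, hvv, hvb, v, hv⟩ := compF zz b y hins hzz
  obtain ⟨a, ha, hva⟩ := hvv hv
  exact ⟨a, ha, v, hva, vv, hvb, hv⟩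

theorem PartF.exists_partF_not_ovF (exF : ∀ zz : Set α, zz.Nonempty → ∃ y, F zz y)
    (wspF : ∀ x y : α, F ({x} ∪ {y}) y → x ≠ y →
      ∃ z ∈ Ucomp F {y}, ¬ ∃ u, F (Ucomp F {x} ∩ Ucomp F {z}) u)
    (hy : F {y} y) (hxy : PartF F x y) (hne : x ≠ y) : ∃ z, PartF F z y ∧ ¬ OvF F x z := by
  have hpair : F ({x} ∪ {y}) y := by
    rw [Set.singleton_union]
    exact hxy.fusion_insert extF hy
  obtain ⟨z, hz, hdisj⟩ := wspF x y hpair hne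
  exact ⟨z, mem_Ucomp_singleton.1 hz, fun hov ↦ hdisj (hov.exists_fusion_inter exF)⟩

end Extensionality

end Fusion

theorem fusion_components_unique {α : Type*} (F : Set α → α → Prop)
    (exF : ∀ zz : Set α, zz.Nonempty → ∃ y, F zz y)
    (extF : ∀ (zz yy uu : Set α) (x v : α),
      F zz x → F yy x → F (uu ∪ zz) v → F (uu ∪ yy) v)
    (idF : ∀ x y : α, F {y} x → x = y)
    (compF : ∀ (zz : Set α) (x y : α), F (zz ∪ {x}) y → F zz y →
      ∃ vv, vv ⊆ Ucomp F zz ∧ F vv x ∧ vv.Nonempty)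
    (wspF : ∀ x y : α, F ({x} ∪ {y}) y → x ≠ y →
      ∃ z ∈ Ucomp F {y}, ¬ ∃ u, F (Ucomp F {x} ∩ Ucomp F {z}) u) :
    ∀ x y : α, F (Ucomp F {x}) y → x = y := by
  intro x y hy
  have hself : ∀ a, F {a} a := fusion_singleton exF idF
  have hxy : PartF F x y := ⟨_, hy, mem_Ucomp_singleton.2 (PartF.refl (hself x))⟩
  by_contra hne
  obtain ⟨z, hzy, hxz⟩ := hxy.exists_partF_not_ovF extF exF wspF (hself y) hne
  obtain ⟨a, ha, haz⟩ := hzy.exists_mem_ovF extF compF hy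
  exact hxz (haz.mono_left extF (hself a) (mem_Ucomp_singleton.1 ha))
end

section
/- The weak supplementation principle holds in classical mereology: if PP x y (x is a proper part of y), then there exists z with PP z y and ¬ O z x. -/
/-- Overlap: `x` and `y` share a common part. -/
def OvP {α : Type*} (P : α → α → Prop) (x y : α) : Prop :=
  ∃ z, P z x ∧ P z y

/-- Proper parthood. -/
def PPP {α : Type*} (P : α → α → Prop) (x y : α) : Prop :=
  P x y ∧ x ≠ y

/-- Leśniewski fusion: `x` fuses `zz` iff every member of `zz` is part of `x`
and every part of `x` overlaps some member of `zz`. -/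
def FusL {α : Type*} (P : α → α → Prop) (zz : Set α) (x : α) : Prop :=
  (∀ y ∈ zz, P y x) ∧ ∀ y, P y x → ∃ v ∈ zz, OvP P v y

/-- Components of `zz`: everything that is part of some member of `zz`. -/
def UP {α : Type*} (P : α → α → Prop) (zz : Set α) : Set α :=
  {u | ∃ w ∈ zz, P u w}

/-!
If every proper part of `y` overlapped a proper part `x` of `y`, then `y` would be a fusion of
the singleton `{x}`. By reflexivity `x` is also a fusion of `{x}`, so uniqueness of fusions would
force `x = y`.
-/

section

variable {α : Type*} {P : α → α → Prop} {x y : α}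

theorem OvP.symm (h : OvP P x y) : OvP P y x :=
  let ⟨z, hzx, hzy⟩ := h
  ⟨z, hzy, hzx⟩

theorem ovP_of_part (hx : P x x) (hxy : P x y) : OvP P x y :=
  ⟨x, hx, hxy⟩

theorem fusL_singleton_iff : FusL P {x} y ↔ P x y ∧ ∀ z, P z y → OvP P x z := by
  simp only [FusL, Set.mem_singleton_iff, forall_eq, exists_eq_left]

theorem fusL_singleton_self (hrefl : ∀ x, P x x) (x : α) : FusL P {x} x :=
  fusL_singleton_iff.2 ⟨hrefl x, fun z hzx => (ovP_of_part (hrefl z) hzx).symm⟩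

theorem fusL_singleton_of_forall_ppp_ovP (hx : P x x) (hxy : P x y)
    (hov : ∀ z, PPP P z y → OvP P z x) : FusL P {x} y := by
  refine fusL_singleton_iff.2 ⟨hxy, fun z hzy => ?_⟩
  obtain rfl | hne := eq_or_ne z y
  · exact ovP_of_part hx hxy
  · exact (hov z ⟨hzy, hne⟩).symm

theorem weak_supplementation_general (hrefl : ∀ x, P x x)
    (huniq : ∀ x y, FusL P {x} y → x = y) (hxy : PPP P x y) :
    ∃ z, PPP P z y ∧ ¬ OvP P z x := by
  by_contra! hov
  exact hxy.2 (huniq x y (fusL_singleton_of_forall_ppp_ovP (hrefl x) hxy.1 hov))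

end

theorem weak_supplementation {α : Type*} (P : α → α → Prop)
    (hrefl : ∀ x : α, P x x)
    (hanti : ∀ x y : α, P x y → P y x → x = y)
    (htrans : ∀ x y z : α, P x y → P y z → P x z)
    (hex : ∀ zz : Set α, zz.Nonempty → ∃ x, FusL P zz x)
    (huniq : ∀ (zz : Set α) (x y : α), FusL P zz x → FusL P zz y → x = y) :
    ∀ x y : α, PPP P x y → ∃ z, PPP P z y ∧ ¬ OvP P z x := fun _ _ =>
  weak_supplementation_general hrefl fun x y => huniq {x} x y (fusL_singleton_self hrefl x)
end

section
/- In classical mereology, the principle of composition holds: if F (zz ∪ {x}) y and F zz y, then there exists a nonempty plurality vv with vv ⊆ U zz and F vv x, where U zz = {u | ∃ w ∈ zz, P u w}. -/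
section

variable {α : Type*} {P : α → α → Prop} {zz : Set α} {x y : α}

theorem FusL.nonempty (hrefl : ∀ x, P x x) (hx : FusL P zz x) : zz.Nonempty := by
  obtain ⟨v, hv, -⟩ := hx.2 x (hrefl x)
  exact ⟨v, hv⟩

theorem FusL.exists_part_mem_UP (hy : FusL P zz y) (hxy : P x y) :
    ∃ u ∈ UP P zz, P u x := by
  obtain ⟨w, hw, u, huw, hux⟩ := hy.2 x hxy
  exact ⟨u, ⟨w, hw, huw⟩, hux⟩

theorem fusL_sep_of_forall_exists_part (hrefl : ∀ x, P x x)
    (htrans : ∀ x y z, P x y → P y z → P x z)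
    (hdense : ∀ t, P t x → ∃ u ∈ zz, P u t) : FusL P {u ∈ zz | P u x} x := by
  refine ⟨fun u hu ↦ hu.2, fun t htx ↦ ?_⟩
  obtain ⟨u, hu, hut⟩ := hdense t htx
  have hux : P u x := htrans u t x hut htx
  have hov : OvP P u t := ⟨u, hrefl u, hut⟩
  exact ⟨u, ⟨hu, hux⟩, hov⟩

theorem fusion_comp_general (hrefl : ∀ x, P x x)
    (htrans : ∀ x y z, P x y → P y z → P x z) (hxy : P x y) (hy : FusL P zz y) :
    ∃ vv, vv ⊆ UP P zz ∧ FusL P vv x ∧ vv.Nonempty := by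
  have hdense : ∀ t, P t x → ∃ u ∈ UP P zz, P u t :=
    fun t htx ↦ hy.exists_part_mem_UP (htrans t x y htx hxy)
  have hfus : FusL P {u ∈ UP P zz | P u x} x :=
    fusL_sep_of_forall_exists_part hrefl htrans hdense
  exact ⟨_, Set.sep_subset _ _, hfus, hfus.nonempty hrefl⟩

end

theorem fusion_comp {α : Type*} (P : α → α → Prop)
    (hrefl : ∀ x : α, P x x)
    (hanti : ∀ x y : α, P x y → P y x → x = y)
    (htrans : ∀ x y z : α, P x y → P y z → P x z)
    (hex : ∀ zz : Set α, zz.Nonempty → ∃ x, FusL P zz x)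
    (huniq : ∀ (zz : Set α) (x y : α), FusL P zz x → FusL P zz y → x = y) :
    ∀ (zz : Set α) (x y : α), FusL P (zz ∪ {x}) y → FusL P zz y →
      ∃ vv, vv ⊆ UP P zz ∧ FusL P vv x ∧ vv.Nonempty := by
  intro zz x y hxy hy
  exact fusion_comp_general hrefl htrans (hxy.1 x (Or.inr rfl)) hy
end
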